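/- A client receives zero weight exactly when its loss exceeds the threshold determined by the p-average: for every i, α*_i = 0 if and only if L̂_i ≥ λ/M_p + L̄_p, where α*_i = (m_i/M_p)·[ 1 + M_p·(L̄_p − L̂_i)/λ ]_+. In particular, α* has exactly p nonzero components. -/

import Mathlib

/-!
Number the clients from `1`. Multiplied by `λ`, the bracket `1 + M_k·(L̄_k − x)/λ` becomes
`λ + Σ_{j ≤ k} m_j·(L̂_j − x)`, which decreases in `x`. For `k + 1` in place of `k` and
`x = L̂_{k+1}` the last summand vanishes, so `k + 1` satisfies the condition defining `p` exactly
when `λ + Σ_{j ≤ k} m_j·(L̂_j − L̂_{k+1}) > 0`. For `k = p` this is the condition for client `p + 1`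
to have nonzero weight: by maximality of `p` it fails when `p < N`, hence it fails for all clients
with a larger loss as well. For `k = p − 1` it is the condition for client `p`, which holds, hence
it holds for all clients with a smaller loss.
-/

open Finset

noncomputable section

/-- `Mpart m k = Σ_{i=1}^k m_i`: total number of samples of the first `k` clients
(clients are 0-indexed, so these are clients `0, …, k-1`). -/
def Mpart (m : ℕ → ℝ) (k : ℕ) : ℝ := ∑ i ∈ Finset.range k, m i

/-- `Lbar m L k = (Σ_{i=1}^k m_i·L̂_i) / M_k`: the `k`-average loss. -/
def Lbar (m L : ℕ → ℝ) (k : ℕ) : ℝ :=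
  (∑ i ∈ Finset.range k, m i * L i) / Mpart m k

/-- The set `{ k ∈ {1, …, N} : 1 + M_k·(L̄_k − L̂_k)/λ > 0 }`
(with `L̂_k = L (k-1)` since losses are 0-indexed). -/
def goodSet (m L : ℕ → ℝ) (lam : ℝ) (N : ℕ) : Set ℕ :=
  {k | k ∈ Finset.Icc 1 N ∧ 0 < 1 + Mpart m k * (Lbar m L k - L (k - 1)) / lam}

/-- `p = max{ k ∈ {1,…,N} : 1 + M_k·(L̄_k − L̂_k)/λ > 0 }`. -/
def pIdx (m L : ℕ → ℝ) (lam : ℝ) (N : ℕ) : ℕ := sSup (goodSet m L lam N)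

/-- The optimal weights `α*_i = (m_i/M_p)·[1 + M_p·(L̄_p − L̂_i)/λ]₊` (client `i` 0-indexed). -/
def alphaStar (m L : ℕ → ℝ) (lam : ℝ) (N : ℕ) (i : ℕ) : ℝ :=
  (m i / Mpart m (pIdx m L lam N)) *
    max 0 (1 + Mpart m (pIdx m L lam N) * (Lbar m L (pIdx m L lam N) - L i) / lam)

/-- The objective `F(α) = Σ_i α_i·L̂_i + (λ/2)·Σ_i α_i²/m_i`. -/
def objF (N : ℕ) (m L : ℕ → ℝ) (lam : ℝ) (α : ℕ → ℝ) : ℝ :=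
  ∑ i ∈ Finset.range N, α i * L i + lam / 2 * ∑ i ∈ Finset.range N, (α i) ^ 2 / m i

section

variable {m L : ℕ → ℝ} {lam : ℝ} {N k i : ℕ}

lemma Mpart_pos (hm : ∀ j < k, 0 < m j) (hk : 0 < k) : 0 < Mpart m k :=
  sum_pos (fun j hj => hm j (mem_range.mp hj)) (nonempty_range_iff.mpr hk.ne')

lemma Mpart_mul_Lbar_sub (hM : Mpart m k ≠ 0) (x : ℝ) :
    Mpart m k * (Lbar m L k - x) = ∑ j ∈ range k, m j * (L j - x) := by
  rw [Lbar, mul_sub, mul_div_cancel₀ _ hM, Mpart, sum_mul, ← sum_sub_distrib]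
  simp only [mul_sub]

/-- The bracket `1 + M_k·(L̄_k − x)/λ` multiplied by `λ`, written without the average `L̄_k` so that
it involves no division. Its sign decides both membership in `goodSet` (at `x = L̂_k`) and the
vanishing of `α*_i` (at `k = p` and `x = L̂_i`). -/
def slack (m L : ℕ → ℝ) (lam : ℝ) (k : ℕ) (x : ℝ) : ℝ :=
  lam + ∑ j ∈ range k, m j * (L j - x)

lemma slack_antitone (hm : ∀ j < k, 0 ≤ m j) : Antitone (slack m L lam k) := by
  intro x y hxy
  unfold slack
  gcongr with j hj
  exact hm j (mem_range.mp hj)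

lemma slack_succ_self : slack m L lam (k + 1) (L k) = slack m L lam k (L k) := by
  simp [slack, sum_range_succ]

lemma one_add_div_pos_iff_slack_pos (hlam : 0 < lam) (hM : Mpart m k ≠ 0) (x : ℝ) :
    0 < 1 + Mpart m k * (Lbar m L k - x) / lam ↔ 0 < slack m L lam k x := by
  rw [Mpart_mul_Lbar_sub hM, one_add_div hlam.ne', div_pos_iff_of_pos_right hlam, slack]

lemma slack_pos_iff_lt (hM : 0 < Mpart m k) (x : ℝ) :
    0 < slack m L lam k x ↔ x < lam / Mpart m k + Lbar m L k := by
  rw [slack, ← Mpart_mul_Lbar_sub hM.ne', ← neg_sub x, mul_neg, ← sub_eq_add_neg,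
    sub_pos, ← lt_div_iff₀' hM, sub_lt_iff_lt_add]

lemma succ_mem_goodSet_iff (hlam : 0 < lam) (hM : Mpart m (k + 1) ≠ 0) :
    k + 1 ∈ goodSet m L lam N ↔ k < N ∧ 0 < slack m L lam k (L k) := by
  simp only [goodSet, Set.mem_ofPred_eq, mem_Icc, one_add_div_pos_iff_slack_pos hlam hM,
    Nat.add_sub_cancel, slack_succ_self, Nat.succ_le_iff, Nat.succ_pos, true_and]

lemma goodSet_nonempty (hN : 1 ≤ N) (hm : m 0 ≠ 0) (hlam : 0 < lam) :
    (goodSet m L lam N).Nonempty :=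
  ⟨0 + 1, (succ_mem_goodSet_iff hlam (by simpa [Mpart] using hm)).mpr
    ⟨hN, by simpa [slack] using hlam⟩⟩

lemma pIdx_isGreatest (hne : (goodSet m L lam N).Nonempty) :
    IsGreatest (goodSet m L lam N) (pIdx m L lam N) := by
  have hbdd : BddAbove (goodSet m L lam N) := ⟨N, fun _ hk => (mem_Icc.mp hk.1).2⟩
  exact ⟨Nat.sSup_mem hne hbdd, fun _ hk => le_csSup hbdd hk⟩

lemma Mpart_pos_of_mem_goodSet (hm : ∀ j < N, 0 < m j) (hk : k ∈ goodSet m L lam N) :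
    0 < Mpart m k :=
  have ⟨hk1, hkN⟩ := mem_Icc.mp hk.1
  Mpart_pos (fun j hj => hm j (hj.trans_le hkN)) hk1

lemma alphaStar_ne_zero_iff_slack_pos (hlam : 0 < lam) (hM : Mpart m (pIdx m L lam N) ≠ 0)
    (hi : m i ≠ 0) :
    alphaStar m L lam N i ≠ 0 ↔ 0 < slack m L lam (pIdx m L lam N) (L i) := by
  rw [← one_add_div_pos_iff_slack_pos hlam hM, alphaStar, mul_ne_zero_iff_left (div_ne_zero hi hM),
    ne_eq, max_eq_left_iff, not_le]

lemma slack_pos_of_lt_of_mem_goodSet (hm : ∀ j < N, 0 < m j)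
    (hL : MonotoneOn L (Set.Iio N)) (hlam : 0 < lam) (hk : k ∈ goodSet m L lam N)
    (hik : i < k) : 0 < slack m L lam k (L i) := by
  have hkN : k ≤ N := (mem_Icc.mp hk.1).2
  have hlast : 0 < slack m L lam k (L (k - 1)) :=
    (one_add_div_pos_iff_slack_pos hlam (Mpart_pos_of_mem_goodSet hm hk).ne' _).mp hk.2
  have hle : L i ≤ L (k - 1) :=
    hL (hik.trans_le hkN) (Set.mem_Iio.mpr (by omega)) (Nat.le_sub_one_of_lt hik)
  exact hlast.trans_le (slack_antitone (fun j hj => (hm j (hj.trans_le hkN)).le) hle)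

lemma succ_mem_goodSet_of_slack_pos (hm : ∀ j < N, 0 < m j)
    (hL : MonotoneOn L (Set.Iio N)) (hlam : 0 < lam) (hki : k ≤ i) (hi : i < N)
    (hpos : 0 < slack m L lam k (L i)) : k + 1 ∈ goodSet m L lam N := by
  have hkN : k < N := hki.trans_lt hi
  have hM : 0 < Mpart m (k + 1) := Mpart_pos (fun j hj => hm j (by omega)) k.succ_pos
  refine (succ_mem_goodSet_iff hlam hM.ne').mpr ⟨hkN, hpos.trans_le ?_⟩
  exact slack_antitone (fun j hj => (hm j (hj.trans hkN)).le) (hL hkN hi hki)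

lemma slack_pIdx_pos_iff_lt (hm : ∀ j < N, 0 < m j)
    (hL : MonotoneOn L (Set.Iio N)) (hlam : 0 < lam) (hi : i < N) :
    0 < slack m L lam (pIdx m L lam N) (L i) ↔ i < pIdx m L lam N := by
  have hN : 0 < N := i.zero_le.trans_lt hi
  have hp : IsGreatest (goodSet m L lam N) (pIdx m L lam N) :=
    pIdx_isGreatest (goodSet_nonempty hN (hm 0 hN).ne' hlam)
  refine ⟨fun hpos => ?_, slack_pos_of_lt_of_mem_goodSet hm hL hlam hp.1⟩
  by_contra! hpi
  have hsucc : pIdx m L lam N + 1 ∈ goodSet m L lam N :=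
    succ_mem_goodSet_of_slack_pos hm hL hlam hpi hi hpos
  exact (Nat.lt_succ_self _).not_ge (hp.2 hsucc)

lemma filter_alphaStar_ne_zero (hN : 1 ≤ N) (hm : ∀ j < N, 0 < m j)
    (hL : MonotoneOn L (Set.Iio N)) (hlam : 0 < lam) :
    (range N).filter (fun i => alphaStar m L lam N i ≠ 0) = range (pIdx m L lam N) := by
  have hp : pIdx m L lam N ∈ goodSet m L lam N :=
    (pIdx_isGreatest (goodSet_nonempty hN (hm 0 hN).ne' hlam)).1
  have hM : Mpart m (pIdx m L lam N) ≠ 0 := (Mpart_pos_of_mem_goodSet hm hp).ne'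
  have hne : ∀ i < N, (alphaStar m L lam N i ≠ 0 ↔ i < pIdx m L lam N) := fun i hi =>
    (alphaStar_ne_zero_iff_slack_pos hlam hM (hm i hi).ne').trans
      (slack_pIdx_pos_iff_lt hm hL hlam hi)
  ext i
  rw [mem_filter, mem_range, mem_range, and_congr_right (hne i), and_iff_right_iff_imp]
  exact fun hip => hip.trans_le (mem_Icc.mp hp.1).2

end

/-- `α*_i = 0` iff `L̂_i ≥ λ/M_p + L̄_p`; in particular `α*` has exactly
`p` nonzero components. -/
theorem alphaStar_zero_iff
    (N : ℕ) (hN : 1 ≤ N) (m L : ℕ → ℝ)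
    (hm : ∀ i < N, 0 < m i)
    (hL : ∀ i j, i ≤ j → j < N → L i ≤ L j)
    (lam : ℝ) (hlam : 0 < lam) :
    (∀ i < N, (alphaStar m L lam N i = 0 ↔
      lam / Mpart m (pIdx m L lam N) + Lbar m L (pIdx m L lam N) ≤ L i)) ∧
    ((Finset.range N).filter (fun i => alphaStar m L lam N i ≠ 0)).card =
      pIdx m L lam N := by
  have hp : pIdx m L lam N ∈ goodSet m L lam N :=
    (pIdx_isGreatest (goodSet_nonempty hN (hm 0 hN).ne' hlam)).1
  have hM : 0 < Mpart m (pIdx m L lam N) := Mpart_pos_of_mem_goodSet hm hp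
  have hmono : MonotoneOn L (Set.Iio N) := fun i _ j hj hij => hL i j hij hj
  refine ⟨fun i hi => ?_, ?_⟩
  · rw [← not_iff_not, ← ne_eq, alphaStar_ne_zero_iff_slack_pos hlam hM.ne' (hm i hi).ne',
      slack_pos_iff_lt hM, not_le]
  · rw [filter_alphaStar_ne_zero hN hm hmono hlam, card_range]
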